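/- arXiv:2201.01043 — 2 statements merged into one kernel-verified Lean document; each statement's English description precedes it below -/
import Mathlib

section
/- Let G be a connected finite simple graph and let T be a spanning tree of G that has the minimum number of leaves among all spanning trees of G. Let b be a branch vertex of T, let x be a neighbor of b in T, and let s be a leaf of T such that b lies on the unique path in T from s to x. Then sx is not an edge of G. -/
open SimpleGraph Finset List

open scoped Classical

variable {V : Type*}

/-- `G` contains no induced copy of `K_{1,4}` (a star with four edges). -/
def K14Free (G : SimpleGraph V) : Prop :=
  ¬ ∃ c a b d e : V, a ≠ b ∧ a ≠ d ∧ a ≠ e ∧ b ≠ d ∧ b ≠ e ∧ d ≠ e ∧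
    G.Adj c a ∧ G.Adj c b ∧ G.Adj c d ∧ G.Adj c e ∧
    ¬G.Adj a b ∧ ¬G.Adj a d ∧ ¬G.Adj a e ∧ ¬G.Adj b d ∧ ¬G.Adj b e ∧ ¬G.Adj d e

/-- `s` is an independent set of vertices of `G`. -/
def IsIndepFinset (G : SimpleGraph V) (s : Finset V) : Prop :=
  ∀ u ∈ s, ∀ v ∈ s, u ≠ v → ¬G.Adj u v

/-- The set `L(T)` of leaves (vertices of degree one) of `T`. -/
noncomputable def leafSet [Fintype V] (T : SimpleGraph V) : Finset V :=
  Finset.univ.filter fun v => T.degree v = 1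

/-- The set `B(T)` of branch vertices (vertices of degree at least three) of `T`. -/
noncomputable def branchSet [Fintype V] (T : SimpleGraph V) : Finset V :=
  Finset.univ.filter fun v => 3 ≤ T.degree v

/-- `v` is an oblique neighbor of the edge `e` with respect to the (spanning) tree `T` of `G`:
`e = s(a,b)` where `b` is the endpoint of `e` farthest from `v` in `T`, and `v b ∈ E(G)`. -/
def IsObliqueNbr (G T : SimpleGraph V) (e : Sym2 V) (v : V) : Prop :=
  ∃ a b : V, e = s(a, b) ∧ T.dist v a < T.dist v b ∧ G.Adj v b

/-- The number of vertices of the reducible stem `R_Stem(T)` of `T`: a vertex `v` survives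
iff for every leaf `x` of `T` the (unique) path of `T` from `x` to `v` contains a branch
vertex (so exactly the vertices not lying strictly before the first branch vertex on the
path leaving some leaf). -/
noncomputable def rstemCard [Fintype V] (T : SimpleGraph V) : ℕ :=
  {v : V | ∀ x : V, T.degree x = 1 → ∀ p : T.Walk x v, p.IsPath →
    ∃ w ∈ p.support, 3 ≤ T.degree w}.ncard

/-!
If `sx` were an edge of `G`, then `T - bx + sx` would be a spanning tree of `G`: deleting `bx`
separates `x` from `s`, since `s` is still joined to `b`, and the new edge reconnects the two parts.
The exchange raises the degree of `s` from one to two, lowers that of `b` from at least three to at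
least two and preserves all others, so the only change among the leaves is that `s` is lost.
-/

section EdgeRotation

variable {G : SimpleGraph V} {b s v x : V}

/-- The graph `G - bx + sx` obtained by an edge rotation about `x`: the end `b` of the edge `bx` is
moved to `s`. As `edge x x` has no edges, the deleted edge is not replaced when `s = x`. -/
def edgeRotation (G : SimpleGraph V) (x b s : V) : SimpleGraph V :=
  G.deleteEdges {s(b, x)} ⊔ edge s x

theorem edgeRotation_adj {u w : V} : (edgeRotation G x b s).Adj u w ↔
    G.Adj u w ∧ s(u, w) ≠ s(b, x) ∨ s(u, w) = s(s, x) ∧ u ≠ w := by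
  simp [edgeRotation, edge_adj]

theorem edgeRotation_le {H : SimpleGraph V} (hGH : G ≤ H) (hsx : H.Adj s x) :
    edgeRotation G x b s ≤ H :=
  sup_le ((deleteEdges_le _).trans hGH) ((edge_le_iff H).2 (.inr hsx))

theorem reachable_deleteEdges_of_mem_support {p : G.Walk s x} (hp : p.IsPath)
    (hb : b ∈ p.support) (hbx : b ≠ x) : (G.deleteEdges {s(b, x)}).Reachable s b := by
  have hx : x ∉ (p.takeUntil b hb).support :=
    Walk.endpoint_notMem_support_takeUntil hp hb hbx.symm
  exact reachable_deleteEdges_iff_exists_walk.2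
    ⟨p.takeUntil b hb, fun he ↦ hx (Walk.snd_mem_support_of_mem_edges _ he)⟩

theorem not_reachable_deleteEdges_of_isAcyclic (hG : G.IsAcyclic) (hbx : G.Adj b x)
    (hsb : (G.deleteEdges {s(b, x)}).Reachable s b) :
    ¬ (G.deleteEdges {s(b, x)}).Reachable s x :=
  fun hsx ↦ isAcyclic_iff_forall_adj_isBridge.1 hG hbx (hsb.symm.trans hsx)

theorem reachable_edgeRotation_of_adj (hsb : (G.deleteEdges {s(b, x)}).Reachable s b)
    {u w : V} (huw : G.Adj u w) : (edgeRotation G x b s).Reachable u w := by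
  have hbx : (edgeRotation G x b s).Reachable b x := by
    refine (hsb.symm.mono le_sup_left).trans ?_
    obtain rfl | hsx := eq_or_ne s x
    · rfl
    · exact (edgeRotation_adj.2 (.inr ⟨rfl, hsx⟩)).reachable
  by_cases he : s(u, w) = s(b, x)
  · obtain ⟨rfl, rfl⟩ | ⟨rfl, rfl⟩ := Sym2.eq_iff.1 he
    exacts [hbx, hbx.symm]
  · exact (edgeRotation_adj.2 (.inl ⟨huw, he⟩)).reachable

theorem connected_edgeRotation (hG : G.Connected)
    (hsb : (G.deleteEdges {s(b, x)}).Reachable s b) : (edgeRotation G x b s).Connected := by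
  have := hG.nonempty
  refine ⟨fun u w ↦ ?_⟩
  obtain ⟨p⟩ := hG.preconnected u w
  induction p with
  | nil => rfl
  | cons h _ ih => exact (reachable_edgeRotation_of_adj hsb h).trans ih

theorem isTree_edgeRotation (hG : G.IsTree) (hbx : G.Adj b x)
    (hsb : (G.deleteEdges {s(b, x)}).Reachable s b) : (edgeRotation G x b s).IsTree where
  connected := connected_edgeRotation hG.connected hsb
  isAcyclic := (hG.isAcyclic.anti (deleteEdges_le _)).sup_edge_of_not_reachable
    (not_reachable_deleteEdges_of_isAcyclic hG.isAcyclic hbx hsb)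

theorem neighborSet_edgeRotation_of_ne (hvb : v ≠ b) (hvs : v ≠ s) (hvx : v ≠ x) :
    (edgeRotation G x b s).neighborSet v = G.neighborSet v := by
  ext w
  simp [edgeRotation_adj, hvb, hvs, hvx]

theorem encard_neighborSet_edgeRotation_pivot (hbx : G.Adj b x) (hsx : ¬ G.Adj s x)
    (hne : s ≠ x) :
    ((edgeRotation G x b s).neighborSet x).encard = (G.neighborSet x).encard := by
  have hN : (edgeRotation G x b s).neighborSet x = insert s (G.neighborSet x \ {b}) := by
    ext w
    simp only [mem_neighborSet, edgeRotation_adj, Sym2.eq_iff, Set.mem_insert_iff, Set.mem_sdiff,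
      Set.mem_singleton_iff]
    grind
  rw [hN]
  exact Set.encard_exchange (mt Adj.symm hsx) hbx.symm

theorem encard_neighborSet_edgeRotation_source_add_one (hbx : G.Adj b x) (hbs : b ≠ s) :
    ((edgeRotation G x b s).neighborSet b).encard + 1 = (G.neighborSet b).encard := by
  have hN : (edgeRotation G x b s).neighborSet b = G.neighborSet b \ {x} := by
    ext w
    simp [edgeRotation_adj, hbs, hbx.ne]
  rw [hN]
  exact Set.encard_sdiff_singleton_add_one hbx

theorem encard_neighborSet_edgeRotation_target (hsx : ¬ G.Adj s x) (hsb : s ≠ b) (hne : s ≠ x) :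
    ((edgeRotation G x b s).neighborSet s).encard = (G.neighborSet s).encard + 1 := by
  have hN : (edgeRotation G x b s).neighborSet s = insert x (G.neighborSet s) := by
    ext w
    simp only [mem_neighborSet, edgeRotation_adj, Sym2.eq_iff, Set.mem_insert_iff]
    grind
  rw [hN]
  exact Set.encard_insert_of_notMem hsx

end EdgeRotation

section Leaves

variable {G : SimpleGraph V} {b s x : V}

/-- The set of leaves (vertices with exactly one neighbor) of a graph that need not be finite or
locally finite. For finite graphs this is `leafSet`. -/
def leaves (G : SimpleGraph V) : Set V :=
  {v | (G.neighborSet v).encard = 1}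

theorem mem_leaves {v : V} : v ∈ leaves G ↔ (G.neighborSet v).encard = 1 :=
  .rfl

theorem encard_neighborSet (G : SimpleGraph V) (v : V) [Fintype (G.neighborSet v)] :
    (G.neighborSet v).encard = G.degree v := by
  rw [Set.encard_eq_coe_toFinset_card, ← card_neighborFinset_eq_degree, neighborFinset]

theorem mem_leafSet [Fintype V] {v : V} : v ∈ leafSet G ↔ v ∈ leaves G := by
  simp [leafSet, mem_leaves, encard_neighborSet]

theorem mem_branchSet [Fintype V] {v : V} :
    v ∈ branchSet G ↔ 3 ≤ (G.neighborSet v).encard := by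
  simp [branchSet, encard_neighborSet]

theorem card_leafSet_lt_card_leafSet [Fintype V] {H : SimpleGraph V} (h : leaves G ⊂ leaves H) :
    (leafSet G).card < (leafSet H).card := by
  refine Finset.card_lt_card (Finset.coe_ssubset.1 ?_)
  convert h using 1 <;> exact Set.ext fun _ ↦ mem_leafSet

theorem leaves_edgeRotation_ssubset (hb : 3 ≤ (G.neighborSet b).encard) (hs : s ∈ leaves G)
    (hbx : G.Adj b x) (hsx : ¬ G.Adj s x) (hne : s ≠ x) :
    leaves (edgeRotation G x b s) ⊂ leaves G := by
  have hsb : s ≠ b := by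
    rintro rfl
    exact hsx hbx
  have hs' : s ∉ leaves (edgeRotation G x b s) := fun h ↦ by
    have h2 := encard_neighborSet_edgeRotation_target hsx hsb hne
    rw [mem_leaves.1 h, mem_leaves.1 hs] at h2
    norm_num at h2
  refine (Set.ssubset_iff_of_subset fun v hv ↦ ?_).2 ⟨s, hs, hs'⟩
  have hvs : v ≠ s := ne_of_mem_of_not_mem hv hs'
  have hvb : v ≠ b := by
    rintro rfl
    rw [← encard_neighborSet_edgeRotation_source_add_one hbx hvs, mem_leaves.1 hv] at hb
    norm_num at hb
  by_cases hvx : v = x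
  · subst hvx
    rwa [mem_leaves, encard_neighborSet_edgeRotation_pivot hbx hsx hne] at hv
  · rwa [mem_leaves, neighborSet_edgeRotation_of_ne hvb hvs hvx] at hv

end Leaves

theorem stmt10_general (G T : SimpleGraph V) (hT : T ≤ G) (hTree : T.IsTree)
    (hmin : ∀ T' : SimpleGraph V, T' ≤ G → T'.IsTree → ¬ leaves T' ⊂ leaves T)
    (b x s : V) (hb : 3 ≤ (T.neighborSet b).encard) (hx : T.Adj b x) (hs : s ∈ leaves T)
    (hbpath : ∀ p : T.Walk s x, p.IsPath → b ∈ p.support) :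
    ¬ G.Adj s x := by
  intro hsx
  obtain ⟨p, hp⟩ := hTree.connected.exists_isPath s x
  have hsb : (T.deleteEdges {s(b, x)}).Reachable s b :=
    reachable_deleteEdges_of_mem_support hp (hbpath p hp) hx.ne
  have hne : s ≠ b := by
    rintro rfl
    rw [mem_leaves.1 hs] at hb
    norm_num at hb
  have hTsx : ¬ T.Adj s x := fun h ↦
    not_reachable_deleteEdges_of_isAcyclic hTree.isAcyclic hx hsb
      (deleteEdges_adj.2 ⟨h, by simp [hne, hsx.ne]⟩).reachable
  exact hmin (edgeRotation T x b s) (edgeRotation_le hT hsx) (isTree_edgeRotation hTree hx hsb)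
    (leaves_edgeRotation_ssubset hb hs hx hTsx hsx.ne)

/-- Let `T` be a spanning tree of a connected graph `G` with the minimum
number of leaves, `b` a branch vertex of `T`, `x` a neighbor of `b` in `T`, and `s` a leaf
of `T` such that `b` lies on the (unique) path of `T` from `s` to `x`. Then `sx ∉ E(G)`. -/
theorem stmt10 {V : Type*} [Fintype V] (G T : SimpleGraph V) (hG : G.Connected)
    (hT : T ≤ G) (hTree : T.IsTree)
    (hC1 : ∀ T' : SimpleGraph V, T' ≤ G → T'.IsTree →
      (leafSet T).card ≤ (leafSet T').card)
    (b x s : V) (hb : b ∈ branchSet T) (hx : T.Adj b x) (hs : s ∈ leafSet T)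
    (hbpath : ∀ p : T.Walk s x, p.IsPath → b ∈ p.support) :
    ¬ G.Adj s x :=
  stmt10_general G T hT hTree (fun T' hle htree hlt ↦ (card_leafSet_lt_card_leafSet hlt).not_ge
    (hC1 T' hle htree)) b x s (mem_branchSet.1 hb) hx (mem_leafSet.1 hs) hbpath
end

section
/- Let G be a connected K_{1,4}-free finite simple graph and let T be a spanning tree of G that has the minimum number of leaves among all spanning trees of G, and suppose B(T) ≠ ∅. Then L(T) is pseudoindependent with respect to T, i.e., no two leaves of T are both oblique neighbors of a common edge of T. -/
/-!
Let `xy` be an edge of a spanning tree `T` with the fewest leaves, and let `s ≠ x` be a leaf on the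
side of `x` that is joined to `y` in `G`. Then `T - xy + sy` is a spanning tree in which `s` is no
longer a leaf, so by minimality `x` has degree two in `T` and becomes a leaf in place of `s`; the
new tree again has the fewest leaves, and the same branch vertices. Two leaves `s`, `t` are never
adjacent in `G`, since trading an edge at a branch vertex on the path from `s` to `t` for `st`
would lose a leaf. Applied to the exchanged tree, this says that no other leaf `t` is adjacent
to `x`.

Now suppose that leaves `s`, `t` are oblique neighbors of the same edge `xy`. If their far ends
differ, one is adjacent to `y` and the other to `x`, which was just excluded. If both have far end
`y`, then `y` has a further neighbor `z` in `T`, and the same facts for `T`, for the exchanged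
tree, and for the edges `xy` and `yz` show that `y` together with `s`, `t`, `x`, `z` is an induced
`K_{1,4}`.
-/

open SimpleGraph Finset List

open scoped Classical

variable {V : Type*}

section Bridge

variable {G : SimpleGraph V} {s t u v x y z : V}

theorem preconnected_of_forall_adj_reachable {H : SimpleGraph V} (hG : G.Preconnected)
    (h : ∀ a b, G.Adj a b → H.Reachable a b) : H.Preconnected := by
  intro a b
  obtain ⟨p⟩ := hG a b
  induction p with
  | nil => exact Reachable.refl _
  | cons hadj _ ih => exact (h _ _ hadj).trans ih

theorem reachable_deleteEdges_of_dist_lt (hG : G.Connected) (h : G.dist s x < G.dist s y) :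
    (G.deleteEdges {s(x, y)}).Reachable s x := by
  obtain ⟨p, hp⟩ := hG.exists_walk_length_eq_dist s x
  by_contra hsep
  have hy : y ∈ p.support :=
    p.snd_mem_support_of_mem_edges (p.mem_edges_of_not_reachable_deleteEdges hsep)
  have hdist := dist_le (p.takeUntil y hy)
  have hlength := p.length_takeUntil_le_length hy
  lia

theorem not_reachable_deleteEdges_of_reachable (hxy : G.IsBridge s(x, y))
    (hu : (G.deleteEdges {s(x, y)}).Reachable u x)
    (hv : (G.deleteEdges {s(x, y)}).Reachable v y) :
    ¬ (G.deleteEdges {s(x, y)}).Reachable u v :=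
  fun huv => isBridge_iff.mp hxy (hu.symm.trans (huv.trans hv))

theorem eq_of_adj_of_reachable_deleteEdges (hxy : G.IsBridge s(x, y))
    (hu : (G.deleteEdges {s(x, y)}).Reachable u x)
    (hv : (G.deleteEdges {s(x, y)}).Reachable v y) (huv : G.Adj u v) : s(u, v) = s(x, y) := by
  by_contra hne
  exact not_reachable_deleteEdges_of_reachable hxy hu hv
    (deleteEdges_adj.mpr ⟨huv, hne⟩).reachable

theorem not_adj_of_reachable_deleteEdges (hxy : G.IsBridge s(x, y))
    (hs : (G.deleteEdges {s(x, y)}).Reachable s x) (hsx : s ≠ x) : ¬ G.Adj s y := fun hsy =>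
  hsx (Sym2.congr_left.mp (eq_of_adj_of_reachable_deleteEdges hxy hs (Reachable.refl y) hsy))

theorem reachable_deleteEdges_next (hxy : G.IsBridge s(x, y)) (hadj : G.Adj x y) (hzx : z ≠ x)
    (hs : (G.deleteEdges {s(x, y)}).Reachable s x) :
    (G.deleteEdges {s(y, z)}).Reachable s y := by
  obtain ⟨p, hp⟩ := reachable_deleteEdges_iff_exists_walk.mp hs
  by_contra hsep
  have hxy' : (G.deleteEdges {s(y, z)}).Adj x y :=
    deleteEdges_adj.mpr ⟨hadj, by simp [Sym2.eq_swap (a := x), hzx.symm, hadj.ne]⟩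
  have hyz : s(y, z) ∈ p.edges :=
    p.mem_edges_of_not_reachable_deleteEdges fun h => hsep (h.trans hxy'.reachable)
  have hy : y ∈ p.support := p.fst_mem_support_of_mem_edges hyz
  have hsy : (G.deleteEdges {s(x, y)}).Reachable s y :=
    ⟨(p.takeUntil y hy).toDeleteEdge _ fun h => hp (p.edges_takeUntil_subset_edges hy h)⟩
  exact not_reachable_deleteEdges_of_reachable hxy hs (Reachable.refl y) hsy

theorem eq_of_reachable_deleteEdges_of_degree_eq_one [Fintype (G.neighborSet x)]
    (hx : G.degree x = 1) (hxy : G.Adj x y)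
    (ht : (G.deleteEdges {s(x, y)}).Reachable t x) : t = x := by
  by_contra htx
  obtain ⟨p⟩ := ht.symm
  obtain ⟨hxa, hne⟩ := deleteEdges_adj.mp (p.adj_snd (Walk.not_nil_of_ne (Ne.symm htx)))
  rw [(degree_eq_one_iff_existsUnique_adj.mp hx).unique hxa hxy] at hne
  exact hne rfl

end Bridge

section Branch

variable {G : SimpleGraph V} [G.LocallyFinite] {s t v a : V}

theorem mem_support_of_adj_of_degree_eq_one (p : G.Walk s t) (hs : G.degree s = 1) (hst : s ≠ t)
    (ha : G.Adj s a) : a ∈ p.support := by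
  have hsnd := p.adj_snd (Walk.not_nil_of_ne hst)
  rw [(degree_eq_one_iff_existsUnique_adj.mp hs).unique ha hsnd]
  exact p.getVert_mem_support 1

theorem three_le_degree_of_isPath {p : G.Walk s t} (hp : p.IsPath) (hv : v ∈ p.support)
    (hvs : v ≠ s) (hvt : v ≠ t) (hva : G.Adj v a) (ha : a ∉ p.support) : 3 ≤ G.degree v := by
  have hssub : p.toSubgraph.neighborSet v ⊂ G.neighborSet v := by
    refine (p.toSubgraph.neighborSet_subset v).ssubset_of_mem_notMem hva fun h => ha ?_
    exact p.mem_verts_toSubgraph.mp (Subgraph.Adj.snd_mem h)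
  have htwo : (p.toSubgraph.neighborSet v).ncard = 2 := by
    obtain ⟨i, rfl, hi⟩ := Walk.mem_support_iff_exists_getVert.mp hv
    refine hp.ncard_neighborSet_toSubgraph_internal_eq_two ?_ (hi.lt_of_ne ?_)
    · rintro rfl
      exact hvs p.getVert_zero
    · rintro rfl
      exact hvt p.getVert_length
  calc 3 = (p.toSubgraph.neighborSet v).ncard + 1 := by rw [htwo]
    _ ≤ (G.neighborSet v).ncard := Set.ncard_lt_ncard hssub
    _ = G.degree v := by rw [← card_neighborSet_eq_degree, ← Nat.card_eq_fintype_card,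
        Nat.card_coe_set_eq]

theorem exists_three_le_degree_mem_support (hG : G.Connected) (hb : ∃ b, 3 ≤ G.degree b)
    (hs : G.degree s = 1) (ht : G.degree t = 1) (hst : s ≠ t) {p : G.Walk s t} (hp : p.IsPath) :
    ∃ b ∈ p.support, 3 ≤ G.degree b := by
  obtain ⟨b, hb⟩ := hb
  by_cases hbp : b ∈ p.support
  · exact ⟨b, hbp, hb⟩
  obtain ⟨q⟩ := hG s b
  obtain ⟨d, -, hfst, hsnd⟩ := q.exists_boundary_dart {v | v ∈ p.support} p.start_mem_support hbp
  refine ⟨d.fst, hfst, three_le_degree_of_isPath hp hfst ?_ ?_ d.adj hsnd⟩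
  · intro h
    exact hsnd (mem_support_of_adj_of_degree_eq_one p hs hst (h ▸ d.adj))
  · intro h
    apply hsnd
    simpa using mem_support_of_adj_of_degree_eq_one p.reverse ht hst.symm (h ▸ d.adj)

theorem exists_adj_separating (hG : G.Connected) (hb : ∃ b, 3 ≤ G.degree b)
    (hs : G.degree s = 1) (ht : G.degree t = 1) (hst : s ≠ t) :
    ∃ b c, 3 ≤ G.degree b ∧ G.Adj b c ∧ (G.deleteEdges {s(b, c)}).Reachable s b ∧
      (G.deleteEdges {s(b, c)}).Reachable t c := by
  obtain ⟨p, hp⟩ := hG.exists_isPath s t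
  obtain ⟨b, hbp, hb⟩ := exists_three_le_degree_mem_support hG hb hs ht hst hp
  obtain ⟨q, r, rfl⟩ := Walk.mem_support_iff_exists_append.mp hbp
  cases r with
  | nil => lia
  | @cons _ c _ hbc r =>
    have hnodup := hp.isTrail.edges_nodup
    rw [Walk.edges_append, Walk.edges_cons, List.nodup_middle, List.nodup_cons,
      List.mem_append, not_or] at hnodup
    obtain ⟨⟨hq, hr⟩, -⟩ := hnodup
    exact ⟨b, c, hb, hbc, ⟨q.toDeleteEdge _ hq⟩, ⟨(r.toDeleteEdge _ hr).reverse⟩⟩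

end Branch

section Exchange

variable {G T : SimpleGraph V} {u v w x y : V}

/-- The edge exchange `T - xy + uv`; for a tree `T` with `u` and `v` on different sides of its edge
`xy` it is again a tree. -/
def exchangeEdge (T : SimpleGraph V) (x y u v : V) : SimpleGraph V :=
  T.deleteEdges {s(x, y)} ⊔ edge u v

theorem exchangeEdge_le (hT : T ≤ G) (huv : G.Adj u v) : exchangeEdge T x y u v ≤ G :=
  sup_le ((deleteEdges_le _).trans hT) ((edge_le_iff _).mpr (Or.inr huv))

theorem adj_exchangeEdge (huv : u ≠ v) : (exchangeEdge T x y u v).Adj u v :=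
  Or.inr ((edge_adj ..).mpr ⟨Or.inl ⟨rfl, rfl⟩, huv⟩)

theorem deleteEdges_exchangeEdge (huv : ¬ T.Adj u v) :
    (exchangeEdge T x y u v).deleteEdges {s(u, v)} = T.deleteEdges {s(x, y)} := by
  have huv' : ¬ (T.deleteEdges {s(x, y)}).Adj u v := fun h => huv (deleteEdges_le _ h)
  rw [exchangeEdge, deleteEdges_sup, deleteEdges_edge (Set.mem_singleton _), sup_bot_eq,
    deleteEdges_eq_self, Set.disjoint_singleton_right]
  exact huv'

theorem isTree_exchangeEdge (hT : T.IsTree) (hxy : T.Adj x y)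
    (hu : (T.deleteEdges {s(x, y)}).Reachable u x)
    (hv : (T.deleteEdges {s(x, y)}).Reachable v y) : (exchangeEdge T x y u v).IsTree := by
  have hbridge : T.IsBridge s(x, y) := isAcyclic_iff_forall_adj_isBridge.mp hT.isAcyclic hxy
  have hsep := not_reachable_deleteEdges_of_reachable hbridge hu hv
  have huv : u ≠ v := fun h => hsep (h ▸ Reachable.refl u)
  have hle : T.deleteEdges {s(x, y)} ≤ exchangeEdge T x y u v := le_sup_left
  have hxy' : (exchangeEdge T x y u v).Reachable x y :=
    (hu.mono hle).symm.trans ((adj_exchangeEdge huv).reachable.trans (hv.mono hle))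
  have hpre : (exchangeEdge T x y u v).Preconnected := by
    refine preconnected_of_forall_adj_reachable hT.connected.preconnected fun a b hab => ?_
    by_cases heq : s(a, b) = s(x, y)
    · obtain ⟨rfl, rfl⟩ | ⟨rfl, rfl⟩ := Sym2.eq_iff.mp heq
      · exact hxy'
      · exact hxy'.symm
    · exact (hle (deleteEdges_adj.mpr ⟨hab, heq⟩)).reachable
  have := hT.connected.nonempty
  exact ⟨⟨hpre⟩, (hT.isAcyclic.anti (deleteEdges_le _)).sup_edge_of_not_reachable hsep⟩

theorem degree_deleteEdges_singleton [Fintype (G.neighborSet w)] {e : Sym2 V}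
    [Fintype ((G.deleteEdges {e}).neighborSet w)] (he : e ∈ G.edgeSet) :
    (G.deleteEdges {e}).degree w + (if w ∈ e then 1 else 0) = G.degree w := by
  have herase : (G.deleteEdges {e}).incidenceFinset w = (G.incidenceFinset w).erase e := by
    ext f
    simp [incidenceSet, and_assoc, and_left_comm]
  rw [← card_incidenceFinset_eq_degree, ← card_incidenceFinset_eq_degree, herase]
  split_ifs with hw
  · exact Finset.card_erase_add_one ((mem_incidenceFinset ..).mpr ⟨he, hw⟩)
  · rw [Finset.erase_eq_of_notMem fun h => hw ((mem_incidenceFinset ..).mp h).2, add_zero]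

theorem degree_exchangeEdge [Fintype (T.neighborSet w)]
    [Fintype ((exchangeEdge T x y u v).neighborSet w)] (hxy : T.Adj x y) (huv : u ≠ v)
    (hn : ¬ T.Adj u v) :
    (exchangeEdge T x y u v).degree w + (if w ∈ s(x, y) then 1 else 0) =
      T.degree w + if w ∈ s(u, v) then 1 else 0 := by
  have hnew : s(u, v) ∈ (exchangeEdge T x y u v).edgeSet := adj_exchangeEdge huv
  have hdel := deleteEdges_exchangeEdge (x := x) (y := y) hn
  have : Fintype ((T.deleteEdges {s(x, y)}).neighborSet w) :=
    Set.fintypeSubset (T.neighborSet w) (neighborSet_mono (deleteEdges_le _) w)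
  have : Fintype (((exchangeEdge T x y u v).deleteEdges {s(u, v)}).neighborSet w) := hdel ▸ this
  rw [← degree_deleteEdges_singleton hnew, ← degree_deleteEdges_singleton (e := s(x, y)) hxy,
    add_right_comm]
  congr! 3

end Exchange

section Leaves

variable [Fintype V] {T : SimpleGraph V} {b c s t v x y : V}

theorem mem_leafSet_s13 : v ∈ leafSet T ↔ T.degree v = 1 := by
  simp [leafSet]

theorem mem_branchSet_s13 : v ∈ branchSet T ↔ 3 ≤ T.degree v := by
  simp [branchSet]

theorem leafSet_exchangeEdge_subset_erase (hs : T.degree s = 1) (hxy : T.Adj x y) (hsx : s ≠ x)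
    (hsy : s ≠ y) (hn : ¬ T.Adj s y) (hx : T.degree x ≠ 2) :
    leafSet (exchangeEdge T x y s y) ⊆ (leafSet T).erase s := by
  intro w
  have hdeg := degree_exchangeEdge (w := w) hxy hsy hn
  simp only [Finset.mem_erase, mem_leafSet_s13, Sym2.mem_iff] at hdeg ⊢
  grind

theorem leafSet_exchangeEdge_eq_insert_erase (hs : T.degree s = 1) (hxy : T.Adj x y) (hsx : s ≠ x)
    (hsy : s ≠ y) (hn : ¬ T.Adj s y) (hx : T.degree x = 2) :
    leafSet (exchangeEdge T x y s y) = insert x ((leafSet T).erase s) := by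
  ext w
  have hdeg := degree_exchangeEdge (w := w) hxy hsy hn
  have hxy' := hxy.ne
  simp only [Finset.mem_insert, Finset.mem_erase, mem_leafSet_s13, Sym2.mem_iff] at hdeg ⊢
  grind

theorem branchSet_exchangeEdge_eq (hs : T.degree s = 1) (hxy : T.Adj x y) (hsx : s ≠ x)
    (hsy : s ≠ y) (hn : ¬ T.Adj s y) (hx : T.degree x = 2) :
    branchSet (exchangeEdge T x y s y) = branchSet T := by
  ext w
  have hdeg := degree_exchangeEdge (w := w) hxy hsy hn
  simp only [mem_branchSet_s13, Sym2.mem_iff] at hdeg ⊢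
  grind

theorem leafSet_exchangeEdge_subset_insert (hs : T.degree s = 1) (ht : T.degree t = 1) (hst : s ≠ t)
    (hbc : T.Adj b c) (hb : 3 ≤ T.degree b) (hn : ¬ T.Adj s t) :
    leafSet (exchangeEdge T b c s t) ⊆ insert c (((leafSet T).erase s).erase t) := by
  intro w
  have hdeg := degree_exchangeEdge (w := w) hbc hst hn
  simp only [Finset.mem_insert, Finset.mem_erase, mem_leafSet_s13, Sym2.mem_iff] at hdeg ⊢
  grind

end Leaves

/-- `T` is a spanning tree of `G` with the minimum number of leaves. Subgraphs of `G` live on the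
same vertex type, so every tree `T ≤ G` is spanning. -/
structure IsMinLeafSpanningTree [Fintype V] (G T : SimpleGraph V) : Prop where
  le : T ≤ G
  isTree : T.IsTree
  card_leafSet_le : ∀ T' : SimpleGraph V, T' ≤ G → T'.IsTree → #(leafSet T) ≤ #(leafSet T')

namespace IsMinLeafSpanningTree

variable [Fintype V] {G T : SimpleGraph V} {s t x y z : V}

theorem isBridge (hT : IsMinLeafSpanningTree G T) (hxy : T.Adj x y) : T.IsBridge s(x, y) :=
  isAcyclic_iff_forall_adj_isBridge.mp hT.isTree.isAcyclic hxy

theorem not_adj_of_leaves (hT : IsMinLeafSpanningTree G T) (hB : (branchSet T).Nonempty)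
    (hs : T.degree s = 1) (ht : T.degree t = 1) : ¬ G.Adj s t := by
  intro hadj
  have hst : s ≠ t := hadj.ne
  obtain ⟨b, c, hb, hbc, hsb, htc⟩ :=
    exists_adj_separating hT.isTree.connected (hB.imp fun _ => mem_branchSet_s13.mp) hs ht hst
  have hn : ¬ T.Adj s t := fun h => by
    obtain ⟨rfl, -⟩ | ⟨-, rfl⟩ := Sym2.eq_iff.mp
      (eq_of_adj_of_reachable_deleteEdges (hT.isBridge hbc) hsb htc h) <;> lia
  have hmin := hT.card_leafSet_le _ (exchangeEdge_le hT.le hadj)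
    (isTree_exchangeEdge hT.isTree hbc hsb htc)
  have hcard : #(leafSet (exchangeEdge T b c s t)) < #(leafSet T) := by
    have hsL : s ∈ leafSet T := mem_leafSet_s13.mpr hs
    have htL : t ∈ (leafSet T).erase s := Finset.mem_erase.mpr ⟨hst.symm, mem_leafSet_s13.mpr ht⟩
    calc #(leafSet (exchangeEdge T b c s t))
        ≤ #(insert c (((leafSet T).erase s).erase t)) :=
          Finset.card_le_card (leafSet_exchangeEdge_subset_insert hs ht hst hbc hb hn)
      _ ≤ #(((leafSet T).erase s).erase t) + 1 := Finset.card_insert_le _ _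
      _ = #((leafSet T).erase s) := Finset.card_erase_add_one htL
      _ < #(leafSet T) := Finset.card_erase_lt_of_mem hsL
  exact hmin.not_gt hcard

theorem degree_eq_two (hT : IsMinLeafSpanningTree G T) (hs : T.degree s = 1) (hxy : T.Adj x y)
    (hsS : (T.deleteEdges {s(x, y)}).Reachable s x) (hsx : s ≠ x) (hsy : G.Adj s y) :
    T.degree x = 2 := by
  by_contra hx
  have hn := not_adj_of_reachable_deleteEdges (hT.isBridge hxy) hsS hsx
  have hmin := hT.card_leafSet_le _ (exchangeEdge_le hT.le hsy)
    (isTree_exchangeEdge hT.isTree hxy hsS (Reachable.refl y))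
  have hcard := Finset.card_le_card (leafSet_exchangeEdge_subset_erase hs hxy hsx hsy.ne hn hx)
  exact (hmin.trans hcard).not_gt (Finset.card_erase_lt_of_mem (mem_leafSet_s13.mpr hs))

theorem leafSet_exchangeEdge (hT : IsMinLeafSpanningTree G T) (hs : T.degree s = 1)
    (hxy : T.Adj x y) (hsS : (T.deleteEdges {s(x, y)}).Reachable s x) (hsx : s ≠ x)
    (hsy : G.Adj s y) :
    leafSet (exchangeEdge T x y s y) = insert x ((leafSet T).erase s) :=
  leafSet_exchangeEdge_eq_insert_erase hs hxy hsx hsy.ne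
    (not_adj_of_reachable_deleteEdges (hT.isBridge hxy) hsS hsx)
    (hT.degree_eq_two hs hxy hsS hsx hsy)

theorem branchSet_exchangeEdge (hT : IsMinLeafSpanningTree G T) (hs : T.degree s = 1)
    (hxy : T.Adj x y) (hsS : (T.deleteEdges {s(x, y)}).Reachable s x) (hsx : s ≠ x)
    (hsy : G.Adj s y) :
    branchSet (exchangeEdge T x y s y) = branchSet T :=
  branchSet_exchangeEdge_eq hs hxy hsx hsy.ne
    (not_adj_of_reachable_deleteEdges (hT.isBridge hxy) hsS hsx)
    (hT.degree_eq_two hs hxy hsS hsx hsy)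

theorem exchange (hT : IsMinLeafSpanningTree G T) (hs : T.degree s = 1) (hxy : T.Adj x y)
    (hsS : (T.deleteEdges {s(x, y)}).Reachable s x) (hsx : s ≠ x) (hsy : G.Adj s y) :
    IsMinLeafSpanningTree G (exchangeEdge T x y s y) where
  le := exchangeEdge_le hT.le hsy
  isTree := isTree_exchangeEdge hT.isTree hxy hsS (Reachable.refl y)
  card_leafSet_le T' hle hT' := by
    refine le_trans ?_ (hT.card_leafSet_le T' hle hT')
    rw [hT.leafSet_exchangeEdge hs hxy hsS hsx hsy]
    calc #(insert x ((leafSet T).erase s)) ≤ #((leafSet T).erase s) + 1 := Finset.card_insert_le _ _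
      _ = #(leafSet T) := Finset.card_erase_add_one (mem_leafSet_s13.mpr hs)

theorem degree_exchangeEdge_near (hT : IsMinLeafSpanningTree G T) (hs : T.degree s = 1)
    (hxy : T.Adj x y) (hsS : (T.deleteEdges {s(x, y)}).Reachable s x) (hsx : s ≠ x)
    (hsy : G.Adj s y) : (exchangeEdge T x y s y).degree x = 1 := by
  rw [← mem_leafSet_s13, hT.leafSet_exchangeEdge hs hxy hsS hsx hsy]
  exact Finset.mem_insert_self _ _

theorem degree_exchangeEdge_of_leaf (hT : IsMinLeafSpanningTree G T) (hs : T.degree s = 1)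
    (ht : T.degree t = 1) (hst : s ≠ t) (hxy : T.Adj x y)
    (hsS : (T.deleteEdges {s(x, y)}).Reachable s x) (hsx : s ≠ x) (hsy : G.Adj s y) :
    (exchangeEdge T x y s y).degree t = 1 := by
  rw [← mem_leafSet_s13, hT.leafSet_exchangeEdge hs hxy hsS hsx hsy]
  exact Finset.mem_insert_of_mem (Finset.mem_erase.mpr ⟨hst.symm, mem_leafSet_s13.mpr ht⟩)

theorem not_adj_near_of_adj_far (hT : IsMinLeafSpanningTree G T) (hB : (branchSet T).Nonempty)
    (hs : T.degree s = 1) (ht : T.degree t = 1) (hst : s ≠ t) (hxy : T.Adj x y)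
    (hsS : (T.deleteEdges {s(x, y)}).Reachable s x) (hsy : G.Adj s y) : ¬ G.Adj t x := by
  intro htx
  obtain rfl | hsx := eq_or_ne s x
  · exact hT.not_adj_of_leaves hB ht hs htx
  refine (hT.exchange hs hxy hsS hsx hsy).not_adj_of_leaves ?_
    (hT.degree_exchangeEdge_of_leaf hs ht hst hxy hsS hsx hsy)
    (hT.degree_exchangeEdge_near hs hxy hsS hsx hsy) htx
  rwa [hT.branchSet_exchangeEdge hs hxy hsS hsx hsy]

theorem not_adj_near_next (hT : IsMinLeafSpanningTree G T) (hB : (branchSet T).Nonempty)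
    (hs : T.degree s = 1) (ht : T.degree t = 1) (hst : s ≠ t) (hxy : T.Adj x y)
    (hsS : (T.deleteEdges {s(x, y)}).Reachable s x) (hsx : s ≠ x) (htx : t ≠ x)
    (hsy : G.Adj s y) (hty : G.Adj t y) (hyz : T.Adj y z) (hzx : z ≠ x) : ¬ G.Adj x z := by
  intro hxz
  have hn := not_adj_of_reachable_deleteEdges (hT.isBridge hxy) hsS hsx
  have hsz : z ≠ s := fun h => hn (h ▸ hyz.symm)
  -- Deleting `sy` from the exchanged tree leaves `T - xy`, where `x` is still joined to `s`; so in
  -- the exchanged tree the leaf `x` reaches `z` through `sy` and then `yz`, with near end `y`.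
  have hsep : ((exchangeEdge T x y s y).deleteEdges {s(s, y)}).Reachable x s := by
    rw [deleteEdges_exchangeEdge hn]
    exact hsS.symm
  have hT' := hT.exchange hs hxy hsS hsx hsy
  have hB' := (hT.branchSet_exchangeEdge hs hxy hsS hsx hsy).symm ▸ hB
  have hx' := hT.degree_exchangeEdge_near hs hxy hsS hsx hsy
  have ht' := hT.degree_exchangeEdge_of_leaf hs ht hst hxy hsS hsx hsy
  have hsy' : (exchangeEdge T x y s y).Adj s y := adj_exchangeEdge hsy.ne
  have hyz' : (exchangeEdge T x y s y).Adj y z :=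
    Or.inl (deleteEdges_adj.mpr ⟨hyz, by simp [Sym2.eq_swap (a := x), hzx, hxy.ne']⟩)
  have hnear := reachable_deleteEdges_next (hT'.isBridge hsy') hsy' hsz hsep
  exact hT'.not_adj_near_of_adj_far hB' hx' ht' htx.symm hyz' hnear hxz hty

theorem not_adj_common_far (hT : IsMinLeafSpanningTree G T) (hB : (branchSet T).Nonempty)
    (hK : K14Free G) (hs : T.degree s = 1) (ht : T.degree t = 1) (hst : s ≠ t) (hxy : T.Adj x y)
    (hsS : (T.deleteEdges {s(x, y)}).Reachable s x) (htS : (T.deleteEdges {s(x, y)}).Reachable t x)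
    (hsy : G.Adj s y) : ¬ G.Adj t y := by
  intro hty
  have hsx : s ≠ x := by
    rintro rfl
    exact hst (eq_of_reachable_deleteEdges_of_degree_eq_one hs hxy htS).symm
  have htx : t ≠ x := by
    rintro rfl
    exact hst (eq_of_reachable_deleteEdges_of_degree_eq_one ht hxy hsS)
  obtain ⟨z, hyz, hzx⟩ : ∃ z, T.Adj y z ∧ z ≠ x := by
    by_contra! h
    exact hT.not_adj_of_leaves hB hs
      (degree_eq_one_iff_existsUnique_adj.mpr ⟨x, hxy.symm, h⟩) hsy
  have hbridge := hT.isBridge hxy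
  have hsz : s ≠ z := by
    rintro rfl
    exact not_adj_of_reachable_deleteEdges hbridge hsS hsx hyz.symm
  have htz : t ≠ z := by
    rintro rfl
    exact not_adj_of_reachable_deleteEdges hbridge htS htx hyz.symm
  have hsS' := reachable_deleteEdges_next hbridge hxy hzx hsS
  have htS' := reachable_deleteEdges_next hbridge hxy hzx htS
  exact hK ⟨y, s, t, x, z, hst, hsx, hsz, htx, htz, hzx.symm,
    hsy.symm, hty.symm, hT.le hxy.symm, hT.le hyz,
    hT.not_adj_of_leaves hB hs ht,
    hT.not_adj_near_of_adj_far hB ht hs hst.symm hxy htS hty,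
    fun h => hT.not_adj_near_of_adj_far hB hs ht hst hyz hsS' h hty,
    hT.not_adj_near_of_adj_far hB hs ht hst hxy hsS hsy,
    fun h => hT.not_adj_near_of_adj_far hB ht hs hst.symm hyz htS' h hsy,
    hT.not_adj_near_next hB hs ht hst hxy hsS hsx htx hsy hty hyz hzx⟩

end IsMinLeafSpanningTree

/-- If `T` is a spanning tree with minimum number of leaves of the connected
`K_{1,4}`-free graph `G` and `B(T) ≠ ∅`, then `L(T)` is pseudoindependent with respect to
`T`: no two distinct leaves are both oblique neighbors of a common edge of `T`. -/
theorem stmt13 {V : Type*} [Fintype V] (G T : SimpleGraph V) (hG : G.Connected)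
    (hK : K14Free G) (hT : T ≤ G) (hTree : T.IsTree)
    (hC1 : ∀ T' : SimpleGraph V, T' ≤ G → T'.IsTree →
      (leafSet T).card ≤ (leafSet T').card)
    (hB : (branchSet T).Nonempty) :
    ∀ s ∈ leafSet T, ∀ t ∈ leafSet T, s ≠ t →
      ¬ ∃ e ∈ T.edgeSet, IsObliqueNbr G T e s ∧ IsObliqueNbr G T e t := by
  rintro s hs t ht hst ⟨e, he, ⟨x, y, rfl, hsd, hsy⟩, ⟨x', y', hxy', htd, hty⟩⟩
  rw [mem_leafSet_s13] at hs ht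
  have hmin : IsMinLeafSpanningTree G T := ⟨hT, hTree, hC1⟩
  have hxy : T.Adj x y := he
  have hsS := reachable_deleteEdges_of_dist_lt hTree.connected hsd
  obtain ⟨rfl, rfl⟩ | ⟨rfl, rfl⟩ := Sym2.eq_iff.mp hxy'
  · have htS := reachable_deleteEdges_of_dist_lt hTree.connected htd
    exact hmin.not_adj_common_far hB hK hs ht hst hxy hsS htS hsy hty
  · exact hmin.not_adj_near_of_adj_far hB hs ht hst hxy hsS hsy hty
end
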